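/- arXiv:0712.0819 — 5 statements merged into one kernel-verified Lean document; each statement's English description precedes it below -/
import Mathlib

section
/- Let q be a complex-valued quadratic form on ℝ^{2n} which is elliptic on its singular space S, i.e., X ∈ S and q(X) = 0 imply X = 0. Then S is a symplectic subspace of ℝ^{2n}: the restriction of the canonical symplectic form σ to S is nondegenerate. -/
open Matrix

/-- The canonical symplectic form `σ((x,ξ),(y,η)) = ξ·y − x·η` on `R^{n+n}`,
where the first `n` coordinates are `x` and the last `n` coordinates are `ξ`.
Over `R = ℂ` this is the ℂ-bilinear extension of the real canonical symplectic form. -/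
def symp {R : Type*} [CommRing R] {n : ℕ} (X Y : Fin (n + n) → R) : R :=
  ∑ i : Fin n, (X (Fin.natAdd n i) * Y (Fin.castAdd n i)
    - X (Fin.castAdd n i) * Y (Fin.natAdd n i))

/-- The canonical inclusion `ℝ^{2n} ⊆ ℂ^{2n}`. -/
def cx {n : ℕ} (X : Fin (n + n) → ℝ) : Fin (n + n) → ℂ := fun i => (X i : ℂ)

/-- The real part of a complex matrix. -/
def ReM {n : ℕ} (F : Matrix (Fin (n + n)) (Fin (n + n)) ℂ) :
    Matrix (Fin (n + n)) (Fin (n + n)) ℝ := F.map Complex.re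

/-- The imaginary part of a complex matrix. -/
def ImM {n : ℕ} (F : Matrix (Fin (n + n)) (Fin (n + n)) ℂ) :
    Matrix (Fin (n + n)) (Fin (n + n)) ℝ := F.map Complex.im

/-- The singular space `S = (⋂_{j=0}^{2n−1} Ker[Re F ∘ (Im F)^j]) ∩ ℝ^{2n}`
associated to a quadratic form with Hamilton map `F`. -/
def singularSpace {n : ℕ} (F : Matrix (Fin (n + n)) (Fin (n + n)) ℂ) :
    Set (Fin (n + n) → ℝ) :=
  {X | ∀ j < n + n, (ReM F * ImM F ^ j).mulVec X = 0}

theorem sing_invariant {n : ℕ} (hn : 1 ≤ n) (F : Matrix (Fin (n + n)) (Fin (n + n)) ℂ)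
    (X : Fin (n + n) → ℝ) (hX : X ∈ singularSpace F) :
    (ImM F).mulVec X ∈ singularSpace F := by
  have key : ∀ k : ℕ, (ReM F * ImM F ^ k).mulVec X = 0 := by
    intro k
    have : NeZero (n + n) := ⟨by omega⟩
    rw [Matrix.pow_eq_aeval_mod_charpoly]
    have hd : (Polynomial.X ^ k %ₘ (ImM F).charpoly).natDegree < n + n := by
      have h1 : (ImM F).charpoly.natDegree = n + n := by
        simp [Matrix.charpoly_natDegree_eq_dim]
      have h2 := Polynomial.natDegree_modByMonic_lt (Polynomial.X ^ k)
        (Matrix.charpoly_monic (ImM F)) (by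
          intro h
          rw [h, Polynomial.natDegree_one] at h1
          omega)
      omega
    rw [Polynomial.aeval_eq_sum_range' hd, Finset.mul_sum, Matrix.sum_mulVec]
    apply Finset.sum_eq_zero
    intro j hj
    rw [Matrix.mul_smul, Matrix.smul_mulVec, hX j (Finset.mem_range.mp hj), smul_zero]
  intro j _
  rw [Matrix.mulVec_mulVec, Matrix.mul_assoc, ← pow_succ]
  exact key _

theorem mulVec_cx {n : ℕ} (F : Matrix (Fin (n + n)) (Fin (n + n)) ℂ) (X : Fin (n + n) → ℝ)
    (h : (ReM F).mulVec X = 0) (i : Fin (n + n)) :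
    F.mulVec (cx X) i = Complex.I * ((ImM F).mulVec X i : ℝ) := by
  have h0 := congrFun h i
  simp only [Matrix.mulVec, dotProduct, ReM, ImM, cx, Matrix.map_apply, Pi.zero_apply] at h0 ⊢
  apply Complex.ext <;> simp [h0]

/-- If a complex-valued quadratic form `q` on `ℝ^{2n}` (with Hamilton
map `F`) is elliptic on its singular space `S`, then `S` is a symplectic subspace:
the restriction of the canonical symplectic form `σ` to `S` is nondegenerate. -/
theorem singularSpace_symplectic_of_elliptic_on_singularSpace
    (n : ℕ) (hn : 1 ≤ n)
    (q : (Fin (n + n) → ℂ) → ℂ)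
    (F : Matrix (Fin (n + n)) (Fin (n + n)) ℂ)
    (hq : ∀ X : Fin (n + n) → ℂ, q X = symp X (F.mulVec X))
    (hskew : ∀ X Y : Fin (n + n) → ℂ, symp (F.mulVec X) Y = -symp X (F.mulVec Y))
    (hell : ∀ X ∈ singularSpace F, q (cx X) = 0 → X = 0) :
    ∀ X ∈ singularSpace F, (∀ Y ∈ singularSpace F, symp X Y = 0) → X = 0 := by
  intro X hX hXY
  apply hell X hX
  have h0 : (ReM F).mulVec X = 0 := by
    have := hX 0 (by omega)
    simpa using this
  have h1 := hXY _ (sing_invariant hn F X hX)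
  have h2 : symp (cx X) (F.mulVec (cx X))
      = Complex.I * ((symp X ((ImM F).mulVec X) : ℝ) : ℂ) := by
    simp only [symp, mulVec_cx F X h0, cx]
    push_cast
    rw [Finset.mul_sum]
    apply Finset.sum_congr rfl
    intro i _
    ring
  rw [hq, h2, h1]
  simp
end

section
/- Let q be a complex-valued quadratic form on ℝ^{2n} with Re q(X) ≤ 0 for all X ∈ ℝ^{2n}, with Hamilton map F and singular space S. For every λ ∈ ℝ, let S_λ = (Ker(F − λ) ⊕ Ker(F + λ)) ∩ ℝ^{2n} (so S_0 = Ker F ∩ ℝ^{2n}). Then for every λ ∈ ℝ one has (Re F)S_λ = {0}, (Im F)S_λ ⊆ S_λ, and consequently S_λ ⊆ S. -/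
open Matrix

/-- The space `S_λ = (Ker(F − λ) ⊕ Ker(F + λ)) ∩ ℝ^{2n}`: real vectors which are the sum
of an eigenvector (or zero) of `F` for the eigenvalue `λ` and one for `−λ`. -/
def Slam {n : ℕ} (F : Matrix (Fin (n + n)) (Fin (n + n)) ℂ) (l : ℝ) :
    Set (Fin (n + n) → ℝ) :=
  {X | ∃ u v : Fin (n + n) → ℂ, F.mulVec u = (l : ℂ) • u ∧
    F.mulVec v = (-(l : ℂ)) • v ∧ cx X = u + v}

lemma symp_add_left' {n : ℕ} (X Y Z : Fin (n + n) → ℝ) :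
    symp (X + Y) Z = symp X Z + symp Y Z := by
  simp only [symp, ← Finset.sum_add_distrib, Pi.add_apply]
  exact Finset.sum_congr rfl fun i _ => by ring

lemma symp_smul_left' {n : ℕ} (c : ℝ) (X Z : Fin (n + n) → ℝ) :
    symp (c • X) Z = c * symp X Z := by
  simp only [symp, Finset.mul_sum, Pi.smul_apply, smul_eq_mul]
  exact Finset.sum_congr rfl fun i _ => by ring

lemma symp_swap' {n : ℕ} (X Y : Fin (n + n) → ℝ) : symp X Y = - symp Y X := by
  simp only [symp, ← Finset.sum_neg_distrib]
  exact Finset.sum_congr rfl fun i _ => by ring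

lemma symp_add_right' {n : ℕ} (X Y Z : Fin (n + n) → ℝ) :
    symp Z (X + Y) = symp Z X + symp Z Y := by
  rw [symp_swap', symp_add_left', symp_swap' X, symp_swap' Y]; ring

lemma symp_smul_right' {n : ℕ} (c : ℝ) (X Z : Fin (n + n) → ℝ) :
    symp Z (c • X) = c * symp Z X := by
  rw [symp_swap', symp_smul_left', symp_swap' X]; ring

lemma symp_nondeg' {n : ℕ} (W : Fin (n + n) → ℝ) (h : ∀ Y, symp Y W = 0) : W = 0 := by
  have h1 := h (Fin.append (fun i => - W (Fin.natAdd n i)) (fun i => W (Fin.castAdd n i)))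
  simp only [symp, Fin.append_left, Fin.append_right] at h1
  rw [Finset.sum_eq_zero_iff_of_nonneg] at h1
  · funext k
    refine Fin.addCases (fun i => ?_) (fun i => ?_) k
    · have := h1 i (Finset.mem_univ _)
      simp only [Pi.zero_apply]
      nlinarith [sq_nonneg (W (Fin.natAdd n i)), sq_nonneg (W (Fin.castAdd n i))]
    · have := h1 i (Finset.mem_univ _)
      simp only [Pi.zero_apply]
      nlinarith [sq_nonneg (W (Fin.natAdd n i)), sq_nonneg (W (Fin.castAdd n i))]
  · intro i _
    nlinarith [sq_nonneg (W (Fin.natAdd n i)), sq_nonneg (W (Fin.castAdd n i))]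

lemma mulVec_re' {n : ℕ} (F : Matrix (Fin (n + n)) (Fin (n + n)) ℂ) (u : Fin (n + n) → ℂ) (i) :
    (F.mulVec u i).re = (ReM F).mulVec (fun k => (u k).re) i
      - (ImM F).mulVec (fun k => (u k).im) i := by
  simp [Matrix.mulVec, dotProduct, ReM, ImM, Finset.sum_sub_distrib]

lemma mulVec_im' {n : ℕ} (F : Matrix (Fin (n + n)) (Fin (n + n)) ℂ) (u : Fin (n + n) → ℂ) (i) :
    (F.mulVec u i).im = (ReM F).mulVec (fun k => (u k).im) i
      + (ImM F).mulVec (fun k => (u k).re) i := by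
  simp [Matrix.mulVec, dotProduct, ReM, ImM, Finset.sum_add_distrib]

lemma mulVec_cx_re' {n : ℕ} (F : Matrix (Fin (n + n)) (Fin (n + n)) ℂ) (X : Fin (n + n) → ℝ) (i) :
    (F.mulVec (cx X) i).re = (ReM F).mulVec X i := by
  simp [Matrix.mulVec, dotProduct, ReM, cx]

lemma mulVec_cx_im' {n : ℕ} (F : Matrix (Fin (n + n)) (Fin (n + n)) ℂ) (X : Fin (n + n) → ℝ) (i) :
    (F.mulVec (cx X) i).im = (ImM F).mulVec X i := by
  simp [Matrix.mulVec, dotProduct, ImM, cx]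

lemma symp_cx_left' {n : ℕ} (X : Fin (n + n) → ℝ) (W : Fin (n + n) → ℂ) :
    (symp (cx X) W).re = symp X (fun i => (W i).re) ∧
    (symp (cx X) W).im = symp X (fun i => (W i).im) := by
  simp [symp, cx]

lemma symp_cx_right' {n : ℕ} (X : Fin (n + n) → ℝ) (W : Fin (n + n) → ℂ) :
    (symp W (cx X)).re = symp (fun i => (W i).re) X ∧
    (symp W (cx X)).im = symp (fun i => (W i).im) X := by
  simp [symp, cx]

lemma kernel_of_null' {n : ℕ} (R : Matrix (Fin (n + n)) (Fin (n + n)) ℝ)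
    (hR : ∀ X Y, symp (R.mulVec X) Y = - symp X (R.mulVec Y))
    (hneg : ∀ X, symp X (R.mulVec X) ≤ 0) (a : Fin (n + n) → ℝ)
    (ha : symp a (R.mulVec a) = 0) : R.mulVec a = 0 := by
  apply symp_nondeg'
  intro Y
  have hs : symp a (R.mulVec Y) = symp Y (R.mulVec a) := by
    rw [symp_swap' Y, hR]; ring
  have key : ∀ t : ℝ, 2 * t * symp Y (R.mulVec a) + t ^ 2 * symp Y (R.mulVec Y) ≤ 0 := by
    intro t
    have := hneg (a + t • Y)
    rw [Matrix.mulVec_add, Matrix.mulVec_smul, symp_add_left', symp_add_right', symp_add_right',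
      symp_smul_left', symp_smul_left', symp_smul_right', symp_smul_right', ha, hs] at this
    linarith
  generalize symp Y (R.mulVec a) = b at key
  have hc := hneg Y
  generalize symp Y (R.mulVec Y) = c at key hc
  have h1 := key (b / (1 - c))
  have hp : 0 < 1 - c := by linarith
  have h2 : 2 * (b / (1 - c)) * b + (b / (1 - c)) ^ 2 * c = b ^ 2 * (2 - c) / (1 - c) ^ 2 := by
    field_simp; ring
  rw [h2] at h1
  by_contra hb
  have : 0 < b ^ 2 * (2 - c) / (1 - c) ^ 2 := by
    have : 0 < 2 - c := by linarith
    positivity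
  linarith

lemma eig_kernel' {n : ℕ} (R M : Matrix (Fin (n + n)) (Fin (n + n)) ℝ)
    (hR : ∀ X Y, symp (R.mulVec X) Y = - symp X (R.mulVec Y))
    (hM : ∀ X Y, symp (M.mulVec X) Y = - symp X (M.mulVec Y))
    (hneg : ∀ X, symp X (R.mulVec X) ≤ 0) (a b : Fin (n + n) → ℝ) (l : ℝ)
    (h1 : R.mulVec a = l • a + M.mulVec b) (h2 : R.mulVec b = l • b + (-1 : ℝ) • M.mulVec a) :
    R.mulVec a = 0 ∧ R.mulVec b = 0 := by
  have e1 : symp a (R.mulVec a) = symp a (M.mulVec b) := by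
    have : symp a a = 0 := by linarith [symp_swap' a a]
    rw [h1, symp_add_right', symp_smul_right', this]; ring
  have e2 : symp b (R.mulVec b) = - symp a (M.mulVec b) := by
    have : symp b b = 0 := by linarith [symp_swap' b b]
    rw [h2, symp_add_right', symp_smul_right', symp_smul_right', this, symp_swap' b, hM]; ring
  have n1 := hneg a
  have n2 := hneg b
  exact ⟨kernel_of_null' R hR hneg a (by linarith), kernel_of_null' R hR hneg b (by linarith)⟩

/-- Let `q` be a complex-valued quadratic form on `ℝ^{2n}` with
`Re q ≤ 0`, Hamilton map `F` and singular space `S`. For every `λ ∈ ℝ`, the space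
`S_λ = (Ker(F − λ) ⊕ Ker(F + λ)) ∩ ℝ^{2n}` satisfies `(Re F) S_λ = {0}`,
`(Im F) S_λ ⊆ S_λ`, and consequently `S_λ ⊆ S`. -/
theorem Slam_subset_singularSpace
    (n : ℕ) (hn : 1 ≤ n)
    (q : (Fin (n + n) → ℂ) → ℂ)
    (F : Matrix (Fin (n + n)) (Fin (n + n)) ℂ)
    (hq : ∀ X : Fin (n + n) → ℂ, q X = symp X (F.mulVec X))
    (hskew : ∀ X Y : Fin (n + n) → ℂ, symp (F.mulVec X) Y = -symp X (F.mulVec Y))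
    (hre : ∀ X : Fin (n + n) → ℝ, (q (cx X)).re ≤ 0) :
    ∀ l : ℝ,
      (fun X => (ReM F).mulVec X) '' Slam F l = {0} ∧
      (fun X => (ImM F).mulVec X) '' Slam F l ⊆ Slam F l ∧
      Slam F l ⊆ singularSpace F := by
  have hR : ∀ X Y, symp ((ReM F).mulVec X) Y = - symp X ((ReM F).mulVec Y) := by
    intro X Y
    have h := congrArg Complex.re (hskew (cx X) (cx Y))
    rw [Complex.neg_re, (symp_cx_left' _ _).1, (symp_cx_right' _ _).1] at h
    simpa only [mulVec_cx_re'] using h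
  have hM : ∀ X Y, symp ((ImM F).mulVec X) Y = - symp X ((ImM F).mulVec Y) := by
    intro X Y
    have h := congrArg Complex.im (hskew (cx X) (cx Y))
    rw [Complex.neg_im, (symp_cx_left' _ _).2, (symp_cx_right' _ _).2] at h
    simpa only [mulVec_cx_im'] using h
  have hneg : ∀ X, symp X ((ReM F).mulVec X) ≤ 0 := by
    intro X
    have h := hre X
    rw [hq, (symp_cx_left' _ _).1] at h
    simpa only [mulVec_cx_re'] using h
  have eig : ∀ (l : ℝ) (u : Fin (n + n) → ℂ), F.mulVec u = (l : ℂ) • u →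
      (ReM F).mulVec (fun k => (u k).re) = 0 := by
    intro l u hu
    refine (eig_kernel' (ReM F) (ImM F) hR hM hneg _ (fun k => (u k).im) l ?_ ?_).1
    · funext i
      have h := congrArg Complex.re (congrFun hu i)
      rw [mulVec_re'] at h
      simp at h ⊢
      linarith
    · funext i
      have h := congrArg Complex.im (congrFun hu i)
      rw [mulVec_im'] at h
      simp at h ⊢
      linarith
  intro l
  have A : ∀ X ∈ Slam F l, (ReM F).mulVec X = 0 := by
    rintro X ⟨u, v, hu, hv, hX⟩
    have : X = (fun k => (u k).re) + (fun k => (v k).re) := by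
      funext k
      have := congrArg Complex.re (congrFun hX k)
      simpa [cx] using this
    rw [this, Matrix.mulVec_add, eig l u hu, eig (-l) v (by simpa using hv), add_zero]
  have B : ∀ X ∈ Slam F l, (ImM F).mulVec X ∈ Slam F l := by
    intro X hXm
    have hA := A X hXm
    obtain ⟨u, v, hu, hv, hX⟩ := hXm
    refine ⟨(-Complex.I) • (F.mulVec u), (-Complex.I) • (F.mulVec v), ?_, ?_, ?_⟩
    · rw [Matrix.mulVec_smul, hu, Matrix.mulVec_smul, hu, smul_comm]
    · rw [Matrix.mulVec_smul, hv, Matrix.mulVec_smul, hv, smul_comm]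
    · rw [← smul_add, ← Matrix.mulVec_add, ← hX]
      funext i
      have h1 := mulVec_cx_re' F X i
      have h2 := mulVec_cx_im' F X i
      rw [hA] at h1
      apply Complex.ext <;> simp [cx, h1, h2]
  refine ⟨?_, ?_, ?_⟩
  · ext Y
    constructor
    · rintro ⟨X, hX, rfl⟩
      exact A X hX
    · rintro rfl
      refine ⟨0, ⟨0, 0, by simp, by simp, ?_⟩, by simp⟩
      funext i
      simp [cx]
  · rintro _ ⟨X, hX, rfl⟩
    exact B X hX
  · intro X hX j _
    have C : ∀ j : ℕ, (ImM F ^ j).mulVec X ∈ Slam F l := by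
      intro j
      induction j with
      | zero => simpa using hX
      | succ k ih =>
        rw [pow_succ', ← Matrix.mulVec_mulVec]
        exact B _ ih
    rw [← Matrix.mulVec_mulVec]
    exact A _ (C j)
end

section
/- Let q be a complex-valued quadratic form on ℝ^{2n} with Re q(X) ≤ 0 for all X ∈ ℝ^{2n}, with Hamilton map F and singular space S, and assume q is elliptic on S (X ∈ S and q(X) = 0 imply X = 0). Then Ker F ∩ ℝ^{2n} = {0}; in particular F has no real eigenvector with eigenvalue 0. -/
open Matrix

/-- Let `q` be a complex-valued quadratic form on `ℝ^{2n}` with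
`Re q ≤ 0`, Hamilton map `F` and singular space `S`, and assume `q` is elliptic on
`S`. Then `Ker F ∩ ℝ^{2n} = {0}`; in particular `F` has no real eigenvector with
eigenvalue `0`. -/
theorem real_kernel_trivial_of_elliptic_on_singularSpace
    (n : ℕ) (hn : 1 ≤ n)
    (q : (Fin (n + n) → ℂ) → ℂ)
    (F : Matrix (Fin (n + n)) (Fin (n + n)) ℂ)
    (hq : ∀ X : Fin (n + n) → ℂ, q X = symp X (F.mulVec X))
    (hskew : ∀ X Y : Fin (n + n) → ℂ, symp (F.mulVec X) Y = -symp X (F.mulVec Y))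
    (hre : ∀ X : Fin (n + n) → ℝ, (q (cx X)).re ≤ 0)
    (hell : ∀ X ∈ singularSpace F, q (cx X) = 0 → X = 0) :
    {X : Fin (n + n) → ℝ | F.mulVec (cx X) = 0} = {0} := by
  ext X
  simp only [Set.mem_setOf_eq, Set.mem_singleton_iff]
  constructor
  · intro h
    have hR : (ReM F).mulVec X = 0 := by
      funext i
      have := congrArg Complex.re (congrFun h i)
      simpa [Matrix.mulVec, dotProduct, cx, ReM] using this
    have hI : (ImM F).mulVec X = 0 := by
      funext i
      have := congrArg Complex.im (congrFun h i)
      simpa [Matrix.mulVec, dotProduct, cx, ImM] using this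
    apply hell X
    · intro j _
      cases j with
      | zero => simpa using hR
      | succ k =>
        rw [pow_succ, ← Matrix.mul_assoc, ← Matrix.mulVec_mulVec, hI, Matrix.mulVec_zero]
    · rw [hq, h]
      simp [symp]
  · rintro rfl
    have : cx (0 : Fin (n + n) → ℝ) = 0 := by
      funext i
      simp [cx]
    rw [this, Matrix.mulVec_zero]
end

section
/- Let q be a complex-valued quadratic form on ℝ^{2n} with Re q(X) ≤ 0 for all X ∈ ℝ^{2n}, with Hamilton map F and singular space S, and assume q is elliptic on S (X ∈ S and q(X) = 0 imply X = 0). Let λ_1, …, λ_r be the distinct positive real eigenvalues of F (so that σ(F) ∩ ℝ = {±λ_1, …, ±λ_r}). Then the singular space decomposes as the direct sum S = S_{λ_1} ⊕ S_{λ_2} ⊕ … ⊕ S_{λ_r}, where S_{λ_j} = (Ker(F − λ_j) ⊕ Ker(F + λ_j)) ∩ ℝ^{2n}, and the summands are pairwise symplectically orthogonal: σ(X,Y) = 0 whenever X ∈ S_{λ_j}, Y ∈ S_{λ_k}, j ≠ k. -/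
open Matrix

namespace SSAux

lemma definite {V : Type*} [AddCommGroup V] [Module ℝ V]
    (Q : V →ₗ[ℝ] V →ₗ[ℝ] ℝ) (hs : ∀ x y, Q x y = Q y x) (ha : ∀ x, Q x x = 0 → x = 0) :
    (∀ x, x ≠ 0 → 0 < Q x x) ∨ (∀ x, x ≠ 0 → Q x x < 0) := by
  by_contra! h
  obtain ⟨⟨x, hx0, hx⟩, ⟨y, hy0, hy⟩⟩ := h
  have hx' : Q x x < 0 := lt_of_le_of_ne hx (fun h => hx0 (ha x h))
  have hy' : 0 < Q y y := lt_of_le_of_ne hy (fun h => hy0 (ha y h.symm))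
  obtain ⟨t, ht⟩ := exists_quadratic_eq_zero (a := Q y y) (b := 2 * Q x y) (c := Q x x) hy'.ne'
    ⟨√(discrim (Q y y) (2 * Q x y) (Q x x)), by
      rw [Real.mul_self_sqrt]
      unfold discrim
      nlinarith [sq_nonneg (2 * Q x y), mul_pos hy' (neg_pos.2 hx')]⟩
  have hz : Q (x + t • y) (x + t • y) = 0 := by
    simp only [map_add, map_smul, LinearMap.add_apply, LinearMap.smul_apply, smul_eq_mul]
    rw [hs y x]; linarith
  have h0 := ha _ hz
  have hxe : x = (-t) • y := by
    rw [neg_smul]; exact eq_neg_of_add_eq_zero_left h0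
  rw [hxe] at hx'
  simp only [map_smul, LinearMap.smul_apply, smul_eq_mul] at hx'
  nlinarith [mul_nonneg (mul_self_nonneg t) hy]

lemma spectral_pos {V : Type*} [AddCommGroup V] [Module ℝ V] [FiniteDimensional ℝ V]
    (Q : V →ₗ[ℝ] V →ₗ[ℝ] ℝ) (hs : ∀ x y, Q x y = Q y x) (hp : ∀ x, x ≠ 0 → 0 < Q x x)
    (T : V →ₗ[ℝ] V) (hT : ∀ x y, Q (T x) y = Q x (T y)) :
    (⨆ μ : ℝ, Module.End.eigenspace T μ) = ⊤ := by
  let core : InnerProductSpace.Core ℝ V :=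
    { inner := fun x y => Q x y
      conj_inner_symm := fun x y => by simp [hs y x]
      re_inner_nonneg := fun x => by
        by_cases h : x = 0
        · simp [h]
        · simpa using (hp x h).le
      add_left := fun x y z => by simp
      smul_left := fun x y r => by simp
      definite := fun x h => by
        by_contra h0
        exact (hp x h0).ne' h }
  let _ : NormedAddCommGroup V := core.toNormedAddCommGroup
  let _ : InnerProductSpace ℝ V := InnerProductSpace.ofCore core.toCore
  have hsym : T.IsSymmetric := fun x y => hT x y
  have := hsym.orthogonalComplement_iSup_eigenspaces_eq_bot
  exact (Submodule.orthogonal_eq_bot_iff).1 this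

lemma spectral {V : Type*} [AddCommGroup V] [Module ℝ V] [FiniteDimensional ℝ V]
    (Q : V →ₗ[ℝ] V →ₗ[ℝ] ℝ) (hs : ∀ x y, Q x y = Q y x) (ha : ∀ x, Q x x = 0 → x = 0)
    (T : V →ₗ[ℝ] V) (hT : ∀ x y, Q (T x) y = Q x (T y)) :
    (⨆ μ : ℝ, Module.End.eigenspace T μ) = ⊤ := by
  rcases definite Q hs ha with h | h
  · exact spectral_pos Q hs h T hT
  · exact spectral_pos (-Q) (fun x y => by simp [hs x y]) (fun x hx => by simpa using h x hx) T
      (fun x y => by simp [hT x y])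

section
variable {R : Type*} [CommRing R] {n : ℕ}

lemma symp_add_left (X Y Z : Fin (n + n) → R) : symp (X + Y) Z = symp X Z + symp Y Z := by
  simp only [symp, ← Finset.sum_add_distrib, Pi.add_apply]
  exact Finset.sum_congr rfl fun i _ => by ring

lemma symp_smul_left (c : R) (X Z : Fin (n + n) → R) : symp (c • X) Z = c * symp X Z := by
  simp only [symp, Finset.mul_sum, Pi.smul_apply, smul_eq_mul]
  exact Finset.sum_congr rfl fun i _ => by ring

lemma symp_swap (X Y : Fin (n + n) → R) : symp X Y = - symp Y X := by
  simp only [symp, ← Finset.sum_neg_distrib]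
  exact Finset.sum_congr rfl fun i _ => by ring

lemma symp_add_right (X Y Z : Fin (n + n) → R) : symp Z (X + Y) = symp Z X + symp Z Y := by
  rw [symp_swap, symp_add_left, symp_swap X, symp_swap Y]; ring

lemma symp_smul_right (c : R) (X Z : Fin (n + n) → R) : symp Z (c • X) = c * symp Z X := by
  rw [symp_swap, symp_smul_left, symp_swap X]; ring

lemma symp_nondeg (X : Fin (n + n) → R) (h : ∀ Y, symp Y X = 0) : X = 0 := by
  funext i
  refine Fin.addCases (fun i => ?_) (fun i => ?_) i
  · have := h (Pi.single (Fin.natAdd n i) 1)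
    have hne : ∀ j : Fin n, Fin.castAdd n j ≠ Fin.natAdd n i := by
      intro j hj
      have := congrArg Fin.val hj
      simp at this; omega
    simpa [symp, Pi.single_apply, hne, -Fin.natAdd_eq_addNat] using this
  · have := h (Pi.single (Fin.castAdd n i) 1)
    have hne : ∀ j : Fin n, Fin.natAdd n j ≠ Fin.castAdd n i := by
      intro j hj
      have := congrArg Fin.val hj
      simp at this; omega
    simpa [symp, Pi.single_apply, hne, -Fin.natAdd_eq_addNat] using this
end

variable {n : ℕ}

lemma symp_cx (X Y : Fin (n + n) → ℝ) : symp (cx X) (cx Y) = ((symp X Y : ℝ) : ℂ) := by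
  simp [symp, cx]

lemma cx_parts (a b a' b' : Fin (n + n) → ℝ)
    (h : cx a + Complex.I • cx b = cx a' + Complex.I • cx b') : a = a' ∧ b = b' := by
  constructor
  · funext i
    have := congrArg Complex.re (congrFun h i)
    simpa [cx] using this
  · funext i
    have := congrArg Complex.im (congrFun h i)
    simpa [cx] using this

lemma mulVec_parts (F : Matrix (Fin (n + n)) (Fin (n + n)) ℂ) (a b : Fin (n + n) → ℝ) :
    F.mulVec (cx a + Complex.I • cx b) =
      cx ((ReM F).mulVec a - (ImM F).mulVec b) +
        Complex.I • cx ((ReM F).mulVec b + (ImM F).mulVec a) := by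
  funext i
  apply Complex.ext
  · simp [Matrix.mulVec, dotProduct, cx, ReM, ImM]
  · simp [Matrix.mulVec, dotProduct, cx, ReM, ImM, Finset.sum_add_distrib]

lemma mulVec_cx (F : Matrix (Fin (n + n)) (Fin (n + n)) ℂ) (a : Fin (n + n) → ℝ) :
    F.mulVec (cx a) = cx ((ReM F).mulVec a) + Complex.I • cx ((ImM F).mulVec a) := by
  have := mulVec_parts F a 0
  have h0 : cx (0 : Fin (n + n) → ℝ) = 0 := by funext i; simp [cx]
  simpa [h0] using this

lemma split (u : Fin (n + n) → ℂ) : ∃ a b : Fin (n + n) → ℝ, u = cx a + Complex.I • cx b := by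
  refine ⟨fun i => (u i).re, fun i => (u i).im, ?_⟩
  funext i
  simp [cx, mul_comm Complex.I, Complex.re_add_im]

lemma skew_parts (F : Matrix (Fin (n + n)) (Fin (n + n)) ℂ)
    (hskew : ∀ X Y : Fin (n + n) → ℂ, symp (F.mulVec X) Y = -symp X (F.mulVec Y))
    (X Y : Fin (n + n) → ℝ) :
    symp ((ReM F).mulVec X) Y = - symp X ((ReM F).mulVec Y) ∧
    symp ((ImM F).mulVec X) Y = - symp X ((ImM F).mulVec Y) := by
  have h := hskew (cx X) (cx Y)
  rw [mulVec_cx, mulVec_cx] at h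
  simp only [symp_add_left, symp_add_right, symp_smul_left, symp_smul_right, symp_cx] at h
  exact ⟨by simpa using congrArg Complex.re h,
    by have := congrArg Complex.im h; simp at this; linarith⟩

lemma q_cx (F : Matrix (Fin (n + n)) (Fin (n + n)) ℂ) (X : Fin (n + n) → ℝ) :
    symp (cx X) (F.mulVec (cx X)) = ((symp X ((ReM F).mulVec X) : ℝ) : ℂ)
      + Complex.I * ((symp X ((ImM F).mulVec X) : ℝ) : ℂ) := by
  rw [mulVec_cx]
  simp only [symp_add_right, symp_smul_right, symp_cx]

lemma ker_of_zero (A : Matrix (Fin (n + n)) (Fin (n + n)) ℝ)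
    (hA : ∀ X Y, symp (A.mulVec X) Y = - symp X (A.mulVec Y))
    (hn : ∀ X, symp X (A.mulVec X) ≤ 0) (X) (h : symp X (A.mulVec X) = 0) : A.mulVec X = 0 := by
  apply symp_nondeg
  intro Y
  have key : ∀ t : ℝ, 2 * t * symp Y (A.mulVec X) + t ^ 2 * symp Y (A.mulVec Y) ≤ 0 := by
    intro t
    have h1 := hn (X + t • Y)
    rw [Matrix.mulVec_add, Matrix.mulVec_smul] at h1
    simp only [symp_add_left, symp_add_right, symp_smul_left, symp_smul_right] at h1
    have h2 : symp X (A.mulVec Y) = symp Y (A.mulVec X) := by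
      rw [symp_swap Y, hA, neg_neg]
    rw [h2, h] at h1
    linarith
  set p := symp Y (A.mulVec X)
  set s := symp Y (A.mulVec Y) with hs
  have hs0 : s ≤ 0 := hn Y
  have h3 := key (p / (1 - s))
  have h4 : 0 < 1 - s := by linarith
  have h5 : (2 * (p / (1 - s)) * p + (p / (1 - s)) ^ 2 * s) = p ^ 2 * (2 - s) / (1 - s) ^ 2 := by
    field_simp; ring
  rw [h5] at h3
  by_contra hp
  have : 0 < p ^ 2 * (2 - s) / (1 - s) ^ 2 := by
    have : 0 < 2 - s := by linarith
    positivity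
  linarith

lemma eig_parts (A B : Matrix (Fin (n + n)) (Fin (n + n)) ℝ)
    (hA : ∀ X Y, symp (A.mulVec X) Y = - symp X (A.mulVec Y))
    (hB : ∀ X Y, symp (B.mulVec X) Y = - symp X (B.mulVec Y))
    (hn : ∀ X, symp X (A.mulVec X) ≤ 0) (l : ℝ) (a b : Fin (n + n) → ℝ)
    (h1 : A.mulVec a - B.mulVec b = l • a) (h2 : A.mulVec b + B.mulVec a = l • b) :
    A.mulVec a = 0 ∧ A.mulVec b = 0 ∧ B.mulVec b = (-l) • a ∧ B.mulVec a = l • b := by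
  have self : ∀ X : Fin (n + n) → ℝ, symp X X = 0 := fun X => by
    have := symp_swap X X; linarith
  have e1 : A.mulVec a = B.mulVec b + l • a := by rw [← h1]; abel
  have e2 : A.mulVec b = (-1 : ℝ) • B.mulVec a + l • b := by rw [← h2, neg_one_smul]; abel
  have f1 : symp a (A.mulVec a) = symp a (B.mulVec b) := by
    rw [e1, symp_add_right, symp_smul_right, self]; ring
  have f2 : symp b (A.mulVec b) = - symp a (B.mulVec b) := by
    rw [e2, symp_add_right, symp_smul_right, symp_smul_right, self, symp_swap b, hB]; ring
  have g1 := hn a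
  have g2 := hn b
  have a0 := ker_of_zero A hA hn a (by linarith)
  have b0 := ker_of_zero A hA hn b (by linarith)
  refine ⟨a0, b0, ?_, ?_⟩
  · rw [a0] at h1; rw [neg_smul, ← h1]; simp
  · rw [b0] at h2; rw [← h2]; simp

lemma slam_char (F : Matrix (Fin (n + n)) (Fin (n + n)) ℂ)
    (hA : ∀ X Y, symp ((ReM F).mulVec X) Y = - symp X ((ReM F).mulVec Y))
    (hB : ∀ X Y, symp ((ImM F).mulVec X) Y = - symp X ((ImM F).mulVec Y))
    (hn : ∀ X, symp X ((ReM F).mulVec X) ≤ 0) (l : ℝ) (X : Fin (n + n) → ℝ) (hX : X ∈ Slam F l) :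
    (ReM F).mulVec X = 0 ∧ (ReM F).mulVec ((ImM F).mulVec X) = 0 ∧
      (ImM F).mulVec ((ImM F).mulVec X) = (-l ^ 2) • X := by
  obtain ⟨u, v, hu, hv, hX⟩ := hX
  obtain ⟨a, b, rfl⟩ := split u
  obtain ⟨c, d, rfl⟩ := split v
  have sm : ∀ (l : ℝ) (a b : Fin (n + n) → ℝ), (l : ℂ) • (cx a + Complex.I • cx b)
      = cx (l • a) + Complex.I • cx (l • b) := by
    intro l a b; funext i; simp [cx]; ring
  rw [mulVec_parts, sm] at hu
  rw [mulVec_parts, ← Complex.ofReal_neg, sm] at hv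
  obtain ⟨u1, u2⟩ := cx_parts _ _ _ _ hu
  obtain ⟨v1, v2⟩ := cx_parts _ _ _ _ hv
  obtain ⟨p1, p2, p3, p4⟩ := eig_parts _ _ hA hB hn l a b u1 u2
  obtain ⟨q1, q2, q3, q4⟩ := eig_parts _ _ hA hB hn (-l) c d v1 v2
  have hXe : X = a + c := by
    funext i
    have := congrArg Complex.re (congrFun hX i)
    simpa [cx] using this
  subst hXe
  refine ⟨by simp [Matrix.mulVec_add, p1, q1], ?_, ?_⟩
  · simp [Matrix.mulVec_add, p4, q4, Matrix.mulVec_smul, Matrix.mulVec_neg, p2, q2]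
  · rw [Matrix.mulVec_add, p4, q4, Matrix.mulVec_add, Matrix.mulVec_smul, Matrix.mulVec_smul, p3, q3]
    module

lemma mem_slam (F : Matrix (Fin (n + n)) (Fin (n + n)) ℂ) (l : ℝ) (hl : l ≠ 0)
    (X : Fin (n + n) → ℝ) (h1 : (ReM F).mulVec X = 0)
    (h2 : (ReM F).mulVec ((ImM F).mulVec X) = 0)
    (h3 : (ImM F).mulVec ((ImM F).mulVec X) = (-l ^ 2) • X) :
    X ∈ Slam F l ∧ (X ≠ 0 → ∃ v : Fin (n + n) → ℂ, v ≠ 0 ∧ F.mulVec v = (l : ℂ) • v) := by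
  have key : ∀ m : ℝ, m ≠ 0 → m ^ 2 = l ^ 2 →
      F.mulVec (cx ((2⁻¹ : ℝ) • X) + Complex.I • cx ((2⁻¹ * m⁻¹) • (ImM F).mulVec X)) =
      (m : ℂ) • (cx ((2⁻¹ : ℝ) • X) + Complex.I • cx ((2⁻¹ * m⁻¹) • (ImM F).mulVec X)) := by
    intro m hm hml
    rw [mulVec_parts]
    simp only [Matrix.mulVec_smul, h1, h2, h3]
    rw [← hml]
    have hm' : (m : ℂ) ≠ 0 := by exact_mod_cast hm
    funext i
    simp [cx]
    field_simp
  refine ⟨⟨_, _, key l hl rfl, by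
    have := key (-l) (neg_ne_zero.2 hl) (by ring)
    rw [Complex.ofReal_neg] at this
    exact this, ?_⟩, fun hX => ⟨_, ?_, key l hl rfl⟩⟩
  · funext i
    simp [cx, inv_neg]
    ring
  · intro h0
    apply hX
    funext i
    have := congrArg Complex.re (congrFun h0 i)
    simpa [cx] using this

/-- The singular space as a submodule. -/
def Ssub (A B : Matrix (Fin (n + n)) (Fin (n + n)) ℝ) : Submodule ℝ (Fin (n + n) → ℝ) where
  carrier := {X | ∀ j : ℕ, (A * B ^ j).mulVec X = 0}
  add_mem' := fun {a b} ha hb j => by rw [Matrix.mulVec_add, ha j, hb j, add_zero]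
  zero_mem' := fun j => by simp
  smul_mem' := fun c x hx j => by rw [Matrix.mulVec_smul, hx j, smul_zero]

lemma mem_Ssub_iff (F : Matrix (Fin (n + n)) (Fin (n + n)) ℂ) (X : Fin (n + n) → ℝ) :
    X ∈ Ssub (ReM F) (ImM F) ↔ X ∈ singularSpace F := by
  constructor
  · intro h j _; exact h j
  · intro h j
    rw [Matrix.pow_eq_aeval_mod_charpoly]
    by_cases hN : n + n = 0
    · funext i; exact absurd i.2 (by omega)
    have hdeg : ((Polynomial.X ^ j : Polynomial ℝ) %ₘ (ImM F).charpoly).natDegree < n + n := by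
      have hne : (ImM F).charpoly ≠ 1 := by
        intro h1
        have := (ImM F).charpoly_natDegree_eq_dim
        rw [h1] at this
        simp at this; omega
      have := Polynomial.natDegree_modByMonic_lt (Polynomial.X ^ j : Polynomial ℝ)
        (ImM F).charpoly_monic hne
      rwa [Matrix.charpoly_natDegree_eq_dim, Fintype.card_fin] at this
    rw [Polynomial.aeval_eq_sum_range' hdeg, Finset.mul_sum, Matrix.sum_mulVec]
    apply Finset.sum_eq_zero
    intro i hi
    rw [Matrix.mul_smul, Matrix.smul_mulVec, h i (Finset.mem_range.1 hi), smul_zero]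

lemma Ssub_inv (A B : Matrix (Fin (n + n)) (Fin (n + n)) ℝ) (X) (hX : X ∈ Ssub A B) :
    B.mulVec X ∈ Ssub A B := by
  intro j
  rw [Matrix.mulVec_mulVec, mul_assoc, ← pow_succ]
  exact hX (j + 1)

lemma Ssub_A (A B : Matrix (Fin (n + n)) (Fin (n + n)) ℝ) (X) (hX : X ∈ Ssub A B) :
    A.mulVec X = 0 := by simpa using hX 0

lemma slam_sub (A B : Matrix (Fin (n + n)) (Fin (n + n)) ℝ) (X) (m : ℝ) (h1 : A.mulVec X = 0)
    (h2 : A.mulVec (B.mulVec X) = 0) (h3 : B.mulVec (B.mulVec X) = m • X) : X ∈ Ssub A B := by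
  have : ∀ j : ℕ, (A * B ^ j).mulVec X = 0 ∧ (A * B ^ (j + 1)).mulVec X = 0 := by
    intro j
    induction j with
    | zero => simpa [← Matrix.mulVec_mulVec] using ⟨h1, h2⟩
    | succ k ih =>
      refine ⟨ih.2, ?_⟩
      rw [pow_succ, pow_succ, ← mul_assoc, ← mul_assoc, ← Matrix.mulVec_mulVec,
        ← Matrix.mulVec_mulVec, h3, Matrix.mulVec_smul, ih.1, smul_zero]
  exact fun j => (this j).1

end SSAux


/-- Let `q` be a complex-valued quadratic form on `ℝ^{2n}` with
`Re q ≤ 0`, Hamilton map `F` and singular space `S`, elliptic on `S`. Let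
`λ_1, …, λ_r` be the distinct positive real eigenvalues of `F` (so that
`σ(F) ∩ ℝ = {±λ_1, …, ±λ_r}`). Then `S = S_{λ_1} ⊕ … ⊕ S_{λ_r}` (every element
of `S` decomposes, each `S_{λ_j} ⊆ S`, and the decomposition is unique), and the
summands are pairwise symplectically orthogonal. -/
theorem singularSpace_eq_direct_sum_Slam
    (n : ℕ) (hn : 1 ≤ n)
    (q : (Fin (n + n) → ℂ) → ℂ)
    (F : Matrix (Fin (n + n)) (Fin (n + n)) ℂ)
    (hq : ∀ X : Fin (n + n) → ℂ, q X = symp X (F.mulVec X))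
    (hskew : ∀ X Y : Fin (n + n) → ℂ, symp (F.mulVec X) Y = -symp X (F.mulVec Y))
    (hre : ∀ X : Fin (n + n) → ℝ, (q (cx X)).re ≤ 0)
    (hell : ∀ X ∈ singularSpace F, q (cx X) = 0 → X = 0)
    (r : ℕ) (lam : Fin r → ℝ)
    (hinj : Function.Injective lam)
    (hpos : ∀ j, 0 < lam j)
    (heig : ∀ j, ∃ v : Fin (n + n) → ℂ, v ≠ 0 ∧ F.mulVec v = (lam j : ℂ) • v)
    (hall : ∀ m : ℝ, (∃ v : Fin (n + n) → ℂ, v ≠ 0 ∧ F.mulVec v = (m : ℂ) • v) →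
      ∃ j, m = lam j ∨ m = -lam j) :
    (∀ X ∈ singularSpace F, ∃ c : Fin r → (Fin (n + n) → ℝ),
        (∀ j, c j ∈ Slam F (lam j)) ∧ X = ∑ j, c j) ∧
    (∀ j, Slam F (lam j) ⊆ singularSpace F) ∧
    (∀ c : Fin r → (Fin (n + n) → ℝ), (∀ j, c j ∈ Slam F (lam j)) →
        ∑ j, c j = 0 → ∀ j, c j = 0) ∧
    (∀ j k, j ≠ k → ∀ X ∈ Slam F (lam j), ∀ Y ∈ Slam F (lam k), symp X Y = 0) := by
  classical
  have hA := fun X Y => (SSAux.skew_parts F hskew X Y).1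
  have hB := fun X Y => (SSAux.skew_parts F hskew X Y).2
  have hneg : ∀ X, symp X ((ReM F).mulVec X) ≤ 0 := by
    intro X
    have := hre X
    rw [hq, SSAux.q_cx] at this
    simpa using this
  have hell' : ∀ X ∈ SSAux.Ssub (ReM F) (ImM F), symp X ((ImM F).mulVec X) = 0 → X = 0 := by
    intro X hX h0
    refine hell X ((SSAux.mem_Ssub_iff F X).1 hX) ?_
    rw [hq, SSAux.q_cx, h0, SSAux.Ssub_A _ _ X hX]
    simp [symp]
  have hchar := fun l X hX => SSAux.slam_char F hA hB hneg l X hX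
  have hsub : ∀ l, ∀ X ∈ Slam F l, X ∈ SSAux.Ssub (ReM F) (ImM F) := by
    intro l X hX
    obtain ⟨h1, h2, h3⟩ := hchar l X hX
    exact SSAux.slam_sub _ _ X _ h1 h2 h3
  -- orthogonality
  have horth : ∀ j k, j ≠ k → ∀ X ∈ Slam F (lam j), ∀ Y ∈ Slam F (lam k), symp X Y = 0 := by
    intro j k hjk X hX Y hY
    have h1 : symp ((ImM F).mulVec ((ImM F).mulVec X)) Y
        = symp X ((ImM F).mulVec ((ImM F).mulVec Y)) := by
      rw [hB, hB, neg_neg]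
    rw [(hchar _ X hX).2.2, (hchar _ Y hY).2.2, SSAux.symp_smul_left, SSAux.symp_smul_right] at h1
    have h2 : lam j ≠ lam k := fun h => hjk (hinj h)
    have h3 : (lam j - lam k) * ((lam j + lam k) * symp X Y) = 0 := by linarith
    have h4 := (mul_eq_zero.1 h3).resolve_left (sub_ne_zero.2 h2)
    exact (mul_eq_zero.1 h4).resolve_left (by have := hpos j; have := hpos k; linarith)
  have hBslam : ∀ j, ∀ X ∈ Slam F (lam j), (ImM F).mulVec X ∈ Slam F (lam j) := by
    intro j X hX
    obtain ⟨h1, h2, h3⟩ := hchar _ X hX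
    refine (SSAux.mem_slam F (lam j) (hpos j).ne' _ h2 ?_ ?_).1
    · rw [h3, Matrix.mulVec_smul, h1, smul_zero]
    · rw [h3, Matrix.mulVec_smul]
  have hzero : ∀ j, (0 : Fin (n + n) → ℝ) ∈ Slam F (lam j) := by
    intro j
    exact ⟨0, 0, by simp, by simp, by funext i; simp [cx]⟩
  have hadd : ∀ j, ∀ X ∈ Slam F (lam j), ∀ Y ∈ Slam F (lam j), X + Y ∈ Slam F (lam j) := by
    rintro j X ⟨u, v, hu, hv, hX⟩ Y ⟨u', v', hu', hv', hY⟩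
    refine ⟨u + u', v + v', ?_, ?_, ?_⟩
    · rw [Matrix.mulVec_add, hu, hu', smul_add]
    · rw [Matrix.mulVec_add, hv, hv', smul_add]
    · have : cx (X + Y) = cx X + cx Y := by funext i; simp [cx]
      rw [this, hX, hY]; abel
  refine ⟨?_, fun j X hX => (SSAux.mem_Ssub_iff F X).1 (hsub _ X hX), ?_, horth⟩
  · intro X hX
    let S := SSAux.Ssub (ReM F) (ImM F)
    let Bl : S →ₗ[ℝ] S := (Matrix.mulVecLin (ImM F)).restrict
      (p := S) (q := S) (fun x hx => SSAux.Ssub_inv _ _ x hx)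
    have hBl : ∀ x : S, ((Bl x : S) : Fin (n + n) → ℝ) = (ImM F).mulVec x := fun x => rfl
    let Q : S →ₗ[ℝ] S →ₗ[ℝ] ℝ := LinearMap.mk₂ ℝ (fun x y => symp (x : Fin (n + n) → ℝ) (Bl y))
      (fun x y z => by simp [SSAux.symp_add_left])
      (fun c x y => by simp [SSAux.symp_smul_left])
      (fun x y z => by simp [SSAux.symp_add_right])
      (fun c x y => by simp [SSAux.symp_smul_right])
    have hQ : ∀ x y : S, Q x y = symp (x : Fin (n + n) → ℝ) ((ImM F).mulVec y) := fun x y => rfl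
    have hs : ∀ x y, Q x y = Q y x := by
      intro x y
      rw [hQ, hQ, SSAux.symp_swap, hB, neg_neg]
    have ha : ∀ x, Q x x = 0 → x = 0 := by
      intro x hx
      exact Subtype.ext (hell' x x.2 hx)
    have hBQ : ∀ x y, Q (Bl x) y = - Q x (Bl y) := by
      intro x y
      rw [hQ, hQ, hBl, hBl, hB]
    have hT := SSAux.spectral Q hs ha (-(Bl ∘ₗ Bl)) (by
      intro x y
      simp [hBQ])
    have hmem : (⟨X, (SSAux.mem_Ssub_iff F X).2 hX⟩ : S) ∈
        ⨆ μ : ℝ, Module.End.eigenspace (-(Bl ∘ₗ Bl)) μ := by rw [hT]; trivial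
    have main : ∀ x : S, x ∈ (⨆ μ : ℝ, Module.End.eigenspace (-(Bl ∘ₗ Bl)) μ) →
        ∃ c : Fin r → (Fin (n + n) → ℝ),
          (∀ j, c j ∈ Slam F (lam j)) ∧ (x : Fin (n + n) → ℝ) = ∑ j, c j := by
      intro x hx
      induction hx using Submodule.iSup_induction' with
      | zero => exact ⟨fun _ => 0, hzero, by simp⟩
      | add x y _ _ hx hy =>
        obtain ⟨c, hc, hxc⟩ := hx
        obtain ⟨d, hd, hyd⟩ := hy
        refine ⟨fun j => c j + d j, fun j => hadd j _ (hc j) _ (hd j), ?_⟩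
        rw [Finset.sum_add_distrib, ← hxc, ← hyd]; rfl
      | mem μ x hx =>
        by_cases hx0 : x = 0
        · exact ⟨fun _ => 0, hzero, by simp [hx0]⟩
        rw [Module.End.mem_eigenspace_iff] at hx
        have hx' : Bl (Bl x) = (-μ) • x := by
          have h : -(Bl (Bl x)) = μ • x := hx
          have h2 : (-μ) • x = -(μ • x) := neg_smul μ x
          rw [h2, ← h, neg_neg]
        have hμQ : μ * Q x x = Q (Bl x) (Bl x) := by
          rw [hBQ, hx']; simp
        have hBx : Bl x ≠ 0 := by
          intro h
          apply hx0
          apply ha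
          change symp (x : Fin (n + n) → ℝ) (Bl x) = 0
          rw [h]; simp [symp]
        have hμ : 0 < μ := by
          rcases SSAux.definite Q hs ha with h | h
          · have := h _ hBx
            rw [← hμQ] at this
            exact pos_of_mul_pos_left this (h x hx0).le
          · have h1 := h _ hBx
            rw [← hμQ] at h1
            have h2 := h x hx0
            by_contra hc
            nlinarith
        have hl : 0 < √μ := Real.sqrt_pos.2 hμ
        have h3 : (ImM F).mulVec ((ImM F).mulVec (x : Fin (n + n) → ℝ)) = (-(√μ) ^ 2) • (x : _) := by
          rw [Real.sq_sqrt hμ.le]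
          exact congrArg Subtype.val hx'
        have hm := SSAux.mem_slam F (√μ) hl.ne' x (SSAux.Ssub_A _ _ _ x.2)
          (SSAux.Ssub_A _ _ _ (Bl x).2) h3
        obtain ⟨j, hj⟩ := hall _ (hm.2 (fun h => hx0 (Subtype.ext h)))
        have hj' : √μ = lam j := by
          rcases hj with hj | hj
          · exact hj
          · have := hpos j; linarith
        refine ⟨Pi.single j (x : Fin (n + n) → ℝ), ?_, ?_⟩
        · intro k
          by_cases hk : k = j
          · subst hk
            rw [Pi.single_eq_same, ← hj']; exact hm.1
          · rw [Pi.single_eq_of_ne hk]; exact hzero k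
        · rw [Finset.sum_pi_single']; simp
    exact main _ hmem
  · intro c hc h0 j
    refine hell' _ (hsub _ _ (hc j)) ?_
    have h1 : symp (∑ k, c k) ((ImM F).mulVec (c j)) = 0 := by rw [h0]; simp [symp]
    have hsum : ∀ (s : Finset (Fin r)) (Z : Fin (n + n) → ℝ),
        symp (∑ k ∈ s, c k) Z = ∑ k ∈ s, symp (c k) Z := by
      intro s Z
      induction s using Finset.induction_on with
      | empty => simp [symp]
      | insert a s ha ih => rw [Finset.sum_insert ha, Finset.sum_insert ha, SSAux.symp_add_left, ih]
    rw [hsum, Finset.sum_eq_single j] at h1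
    · exact h1
    · intro k _ hk
      exact horth k j hk _ (hc k) _ (hBslam j _ (hc j))
    · simp
end

section
/- Fix a ∈ ℝ with a ≠ 0, and consider the quadratic form q on ℝ^4 (with coordinates (x,v,ξ,η)) given by q(x,v,ξ,η) = −η² − v²/4 − i(vξ − a·x·η), which is the Weyl symbol (up to a constant) of the Kramers–Fokker–Planck operator with quadratic potential V(x) = a·x²/2. Then Re q ≤ 0 on ℝ^4, and the singular space of q is trivial: S = (⋂_{j=0}^{3} Ker[Re F ∘ (Im F)^j]) ∩ ℝ^4 = {0}, where F is the Hamilton map of q. -/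
open Matrix

/-- The Weyl symbol (up to a constant) of the Kramers–Fokker–Planck operator with
quadratic potential `V(x) = a·x²/2`: with coordinates `(x,v,ξ,η)` on `ℂ^4` given by
indices `(0,1,2,3)`, `q(x,v,ξ,η) = −η² − v²/4 − i(vξ − a·x·η)`. -/
noncomputable def qKFP (a : ℝ) (X : Fin (2 + 2) → ℂ) : ℂ :=
  -(X 3) ^ 2 - (X 1) ^ 2 / 4 - Complex.I * (X 1 * X 2 - (a : ℂ) * X 0 * X 3)

/-- For `a ≠ 0`, the Kramers–Fokker–Planck quadratic symbol
`q(x,v,ξ,η) = −η² − v²/4 − i(vξ − a·x·η)` has `Re q ≤ 0` on `ℝ^4` and its singular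
space `S = (⋂_{j=0}^{3} Ker[Re F ∘ (Im F)^j]) ∩ ℝ^4` is trivial, where `F` is its
Hamilton map. -/
theorem kramers_fokker_planck_singular_space_trivial
    (a : ℝ) (ha : a ≠ 0)
    (F : Matrix (Fin (2 + 2)) (Fin (2 + 2)) ℂ)
    (hq : ∀ X : Fin (2 + 2) → ℂ, qKFP a X = symp X (F.mulVec X))
    (hskew : ∀ X Y : Fin (2 + 2) → ℂ, symp (F.mulVec X) Y = -symp X (F.mulVec Y)) :
    (∀ X : Fin (2 + 2) → ℝ, (qKFP a (cx X)).re ≤ 0) ∧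
      singularSpace F = {0} := by
  have pol : ∀ X Y : Fin (2 + 2) → ℂ,
      2 * symp X (F.mulVec Y) = qKFP a (X + Y) - qKFP a X - qKFP a Y := by
    intro X Y
    have h := hskew X Y
    rw [hq, hq, hq, Matrix.mulVec_add]
    simp only [symp, Fin.sum_univ_two, Pi.add_apply] at h ⊢
    linear_combination h
  have se : ∀ X Y : Fin 4 → ℂ, symp (n := 2) X Y
      = X 2 * Y 0 - X 0 * Y 2 + (X 3 * Y 1 - X 1 * Y 3) := by
    intro X Y
    simp only [symp, Fin.sum_univ_two]
    rfl
  have hF : F = !![0, -Complex.I / 2, 0, 0; Complex.I * a / 2, 0, 0, -1;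
      0, 0, 0, -Complex.I * a / 2; 0, 1 / 4, Complex.I / 2, 0] := by
    have key : ∀ i j : Fin 4, 2 * symp (n := 2) (Pi.single i 1) (fun k => F k j)
        = qKFP a (Pi.single i 1 + Pi.single j 1) - qKFP a (Pi.single i 1)
          - qKFP a (Pi.single j 1) := by
      intro i j
      have h := pol (Pi.single i 1) (Pi.single j 1)
      rw [Matrix.mulVec_single_one] at h
      exact h
    have e0 : ∀ j, symp (n := 2) (Pi.single (2 : Fin 4) 1) (fun k => F k j) = F 0 j := by
      intro j; rw [se]; simp
    have e1 : ∀ j, symp (n := 2) (Pi.single (3 : Fin 4) 1) (fun k => F k j) = F 1 j := by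
      intro j; rw [se]; simp
    have e2 : ∀ j, symp (n := 2) (Pi.single (0 : Fin 4) 1) (fun k => F k j) = -F 2 j := by
      intro j; rw [se]; simp
    have e3 : ∀ j, symp (n := 2) (Pi.single (1 : Fin 4) 1) (fun k => F k j) = -F 3 j := by
      intro j; rw [se]; simp
    have k0 := fun j => (e0 j).symm.trans (by rw [eq_div_of_mul_eq two_ne_zero ((mul_comm _ _).trans (key 2 j))])
    have k1 := fun j => (e1 j).symm.trans (by rw [eq_div_of_mul_eq two_ne_zero ((mul_comm _ _).trans (key 3 j))])
    have k2 := fun j => (e2 j).symm.trans (by rw [eq_div_of_mul_eq two_ne_zero ((mul_comm _ _).trans (key 0 j))])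
    have k3 := fun j => (e3 j).symm.trans (by rw [eq_div_of_mul_eq two_ne_zero ((mul_comm _ _).trans (key 1 j))])
    ext i j
    fin_cases i
    · refine (k0 j).trans ?_
      fin_cases j <;> simp [qKFP, Pi.single_apply, Fin.ext_iff] <;> ring
    · refine (k1 j).trans ?_
      fin_cases j <;> simp [qKFP, Pi.single_apply, Fin.ext_iff] <;> ring
    · refine (neg_eq_iff_eq_neg.mp (k2 j)).trans ?_
      fin_cases j <;> simp [qKFP, Pi.single_apply, Fin.ext_iff] <;> ring
    · refine (neg_eq_iff_eq_neg.mp (k3 j)).trans ?_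
      fin_cases j <;> simp [qKFP, Pi.single_apply, Fin.ext_iff] <;> ring
  have hR : ReM (n := 2) F = !![0, 0, 0, 0; 0, 0, 0, -1; 0, 0, 0, 0; 0, 1 / 4, 0, 0] := by
    rw [hF]; ext i j
    fin_cases i <;> fin_cases j <;> simp [ReM]
  have hI : ImM (n := 2) F = !![0, -1 / 2, 0, 0; a / 2, 0, 0, 0; 0, 0, 0, -a / 2;
      0, 0, 1 / 2, 0] := by
    rw [hF]; ext i j
    fin_cases i <;> fin_cases j <;> simp [ImM]
  constructor
  · intro X
    have : (qKFP a (cx X)).re = -(X 3) ^ 2 - (X 1) ^ 2 / 4 := by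
      have : qKFP a (cx X) = ((-(X 3) ^ 2 - (X 1) ^ 2 / 4 : ℝ) : ℂ)
          - Complex.I * ((X 1 * X 2 - a * X 0 * X 3 : ℝ) : ℂ) := by
        simp [qKFP, cx]
      rw [this, Complex.sub_re, Complex.ofReal_re, Complex.I_mul_re, Complex.ofReal_im]
      ring
    rw [this]
    nlinarith [sq_nonneg (X 3), sq_nonneg (X 1)]
  · ext X
    simp only [singularSpace, Set.mem_setOf_eq, Set.mem_singleton_iff]
    constructor
    · intro h
      have h0 := h 0 (by norm_num)
      have h1 := h 1 (by norm_num)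
      rw [hR, hI] at h0 h1
      rw [pow_zero, mul_one] at h0
      rw [pow_one, ← Matrix.mulVec_mulVec] at h1
      have a1 := congrFun h0 1
      have a2 := congrFun h0 3
      have b1 := congrFun h1 1
      have b2 := congrFun h1 3
      simp [Matrix.mulVec, dotProduct, Fin.sum_univ_four] at a1 a2 b1 b2
      ext i
      fin_cases i <;> simp_all
    · rintro rfl j _
      exact Matrix.mulVec_zero _
end
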